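/- Regard 𝓕 = 𝓕[k,N] as a function of z₁ = x₁ with the other variables fixed generically. Then 𝓕(z₁+1) = Q₁^{−1} 𝓕(z₁) Q₁ and 𝓕(z₁+τ) = exp(2πi kℏ/M) · Λ₁^{−1} 𝓕(z₁) Λ₁, where Q₁ = Q ⊗ 1_M^{⊗(2N−1)} and Λ₁ = Λ ⊗ 1_M^{⊗(2N−1)}. -/

import Mathlib

open Complex Matrix Finset Filter
open scoped BigOperators Kronecker Topology

noncomputable section

/-- The lattice `ℤ + τℤ ⊂ ℂ`. -/
def lat (τ : ℂ) : Set ℂ := {w : ℂ | ∃ m n : ℤ, w = (m : ℂ) + (n : ℂ) * τ}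

/-- The odd theta function `ϑ(z|τ)`. -/
def theta (τ z : ℂ) : ℂ :=
  -∑' k : ℤ, Complex.exp ((Real.pi : ℂ) * Complex.I * τ * ((k : ℂ) + 1/2)^2
      + 2 * (Real.pi : ℂ) * Complex.I * (z + 1/2) * ((k : ℂ) + 1/2))

/-- The Kronecker elliptic function `φ(z,u) = ϑ'(0)ϑ(z+u)/(ϑ(z)ϑ(u))`. -/
def phi (τ z u : ℂ) : ℂ :=
  deriv (theta τ) 0 * theta τ (z + u) / (theta τ z * theta τ u)

/-- The matrix `Q`, `Q_{kl} = δ_{kl} exp(2πik/M)`. -/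
def Qmat (M : ℕ) : Matrix (Fin M) (Fin M) ℂ :=
  Matrix.diagonal fun k => Complex.exp (2 * (Real.pi : ℂ) * Complex.I * ((k : ℕ) + 1) / M)

/-- The matrix `Λ`, `Λ_{kl} = δ_{k−l+1 ≡ 0 (mod M)}`. -/
def Lmat (M : ℕ) : Matrix (Fin M) (Fin M) ℂ :=
  Matrix.of fun k l => if ((k : ℤ) - (l : ℤ) + 1) % (M : ℤ) = 0 then (1 : ℂ) else 0

/-- `T_α = exp(πiα₁α₂/M) Q^{α₁} Λ^{α₂}`. -/
def Tmat (M : ℕ) (a : ZMod M × ZMod M) : Matrix (Fin M) (Fin M) ℂ :=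
  Complex.exp ((Real.pi : ℂ) * Complex.I * (a.1.val : ℂ) * (a.2.val : ℂ) / M) •
    (Qmat M ^ a.1.val * Lmat M ^ a.2.val)

/-- `ω_α = (α₁ + α₂ τ)/M`. -/
def omegaA (M : ℕ) (τ : ℂ) (a : ZMod M × ZMod M) : ℂ :=
  ((a.1.val : ℂ) + (a.2.val : ℂ) * τ) / M

/-- The Baxter–Belavin R-matrix on `ℂ^M ⊗ ℂ^M`. -/
def Rmat (M : ℕ) [NeZero M] (τ ℏ x : ℂ) : Matrix (Fin M × Fin M) (Fin M × Fin M) ℂ :=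
  (M : ℂ)⁻¹ • ∑ a : ZMod M × ZMod M,
    (Complex.exp (2 * (Real.pi : ℂ) * Complex.I * (a.2.val : ℂ) * x / M) *
      phi τ x (ℏ / M + omegaA M τ a)) • (Tmat M a ⊗ₖ Tmat M (-a))

/-- `R^ℏ_{ij}(x)` acting in the `i`-th and `j`-th tensor factors of `(ℂ^M)^{⊗n}`. -/
def Rop (M : ℕ) [NeZero M] (τ ℏ : ℂ) {n : ℕ} (i j : Fin n) (x : ℂ) :
    Matrix (Fin n → Fin M) (Fin n → Fin M) ℂ :=
  Matrix.of fun f g =>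
    Rmat M τ ℏ x (f i, f j) (g i, g j) *
      ∏ k ∈ univ.filter (fun k => k ≠ i ∧ k ≠ j), (if f k = g k then (1 : ℂ) else 0)

/-- `R^ℏ_{ij} = R^ℏ_{ij}(z_i − z_j)`. -/
def Rz (M : ℕ) [NeZero M] (τ ℏ : ℂ) {n : ℕ} (z : Fin n → ℂ) (i j : Fin n) :
    Matrix (Fin n → Fin M) (Fin n → Fin M) ℂ :=
  Rop M τ ℏ i j (z i - z j)

/-- Ordered product over a finite set of indices, taken in increasing order. -/
def oprodAsc {n : ℕ} {α : Type*} [Monoid α] (s : Finset (Fin n)) (A : Fin n → α) : α :=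
  ((s.sort (· ≤ ·)).map A).prod

/-- Ordered product over a finite set of indices, taken in decreasing order. -/
def oprodDesc {n : ℕ} {α : Type*} [Monoid α] (s : Finset (Fin n)) (A : Fin n → α) : α :=
  (((s.sort (· ≤ ·)).reverse).map A).prod

/-- `𝓡^ℏ_{I,J}`: product over `i ∈ I` in decreasing order of `→∏_{j∈J, j>i} R^ℏ_{ij}`. -/
def calR (M : ℕ) [NeZero M] (τ ℏ : ℂ) {n : ℕ} (z : Fin n → ℂ) (I J : Finset (Fin n)) :
    Matrix (Fin n → Fin M) (Fin n → Fin M) ℂ :=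
  oprodDesc I fun i => oprodAsc (J.filter fun j => i < j) fun j => Rz M τ ℏ z i j

/-- `𝓡'^ℏ_{I,J}`: product over `i ∈ I` in decreasing order of `→∏_{j∈J, j<i} R^ℏ_{ij}`. -/
def calR' (M : ℕ) [NeZero M] (τ ℏ : ℂ) {n : ℕ} (z : Fin n → ℂ) (I J : Finset (Fin n)) :
    Matrix (Fin n → Fin M) (Fin n → Fin M) ℂ :=
  oprodDesc I fun i => oprodAsc (J.filter fun j => j < i) fun j => Rz M τ ℏ z i j

/-- `𝒴^ℏ_{I,J} = (→∏_{j∈J} R^ℏ_{i₁,j}) ⋯ (→∏_{j∈J} R^ℏ_{i_p,j})`, `i₁<⋯<i_p` the elements of `I`. -/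
def calY (M : ℕ) [NeZero M] (τ ℏ : ℂ) {n : ℕ} (z : Fin n → ℂ) (I J : Finset (Fin n)) :
    Matrix (Fin n → Fin M) (Fin n → Fin M) ℂ :=
  oprodAsc I fun i => oprodAsc J fun j => Rz M τ ℏ z i j

/-- `𝒩₁ = {1,…,N}` inside the index set of cardinality `2N`. -/
def N1set (N : ℕ) : Finset (Fin (2*N)) := univ.filter fun i => (i : ℕ) < N

/-- `𝒩₂ = {N+1,…,2N}` inside the index set of cardinality `2N`. -/
def N2set (N : ℕ) : Finset (Fin (2*N)) := univ.filter fun i => N ≤ (i : ℕ)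

/-- `z_i = x_i` for `i ∈ 𝒩₁`, `z_{N+j} = y_j` for `j ∈ 𝒩₁`. -/
def zfun (N : ℕ) (x y : Fin N → ℂ) (i : Fin (2*N)) : ℂ :=
  if h : (i : ℕ) < N then x ⟨(i : ℕ), h⟩
  else y ⟨(i : ℕ) - N, by have := i.isLt; omega⟩

/-- The inclusion `𝒩₁ ∋ a ↪ {1,…,2N}`. -/
def finN1 {N : ℕ} (a : Fin N) : Fin (2*N) := ⟨(a : ℕ), by have := a.isLt; omega⟩

/-- The inclusion `𝒩₂ ∋ b ↪ {1,…,2N}` (`b ↦ N + b`). -/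
def finN2 {N : ℕ} (b : Fin N) : Fin (2*N) := ⟨N + (b : ℕ), by have := b.isLt; omega⟩

/-- `𝓕₁[k,N] = ∑_{I⊂𝒩₁,|I|=k} 𝓡^ℏ_{I,Iᶜ} 𝒴^ℏ_{𝒩₂,I} 𝓡'^ℏ_{I,Iᶜ}`. -/
def F1 (M : ℕ) [NeZero M] (τ ℏ : ℂ) (N k : ℕ) (x y : Fin N → ℂ) :
    Matrix (Fin (2*N) → Fin M) (Fin (2*N) → Fin M) ℂ :=
  ∑ I ∈ (N1set N).powersetCard k,
    calR M τ ℏ (zfun N x y) I (N1set N \ I) *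
      calY M τ ℏ (zfun N x y) (N2set N) I *
        calR' M τ ℏ (zfun N x y) I (N1set N \ I)

/-- `𝓕₂[k,N]`, the second sum in the Theorem. -/
def F2 (M : ℕ) [NeZero M] (τ ℏ : ℂ) (N k : ℕ) (x y : Fin N → ℂ) :
    Matrix (Fin (2*N) → Fin M) (Fin (2*N) → Fin M) ℂ :=
  ∑ J ∈ (N2set N).powersetCard k,
    (oprodDesc J fun j => oprodAsc ((N2set N).filter fun l => j < l ∧ l ∉ J) fun l =>
        Rz M τ ℏ (zfun N x y) l j) *
      (oprodAsc J fun j => oprodAsc (N1set N) fun i => Rz M τ ℏ (zfun N x y) j i) *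
        (oprodDesc J fun j => oprodAsc ((N2set N).filter fun m => m < j ∧ m ∉ J) fun m =>
          Rz M τ ℏ (zfun N x y) m j)


/-- The permutation `P_{ab}` of the `a`-th and `b`-th tensor factors of `(ℂ^M)^{⊗n}`. -/
def Pswap (M : ℕ) {n : ℕ} (a b : Fin n) : Matrix (Fin n → Fin M) (Fin n → Fin M) ℂ :=
  Matrix.of fun f g => if f = g ∘ Equiv.swap a b then (1 : ℂ) else 0

/-- An operator on `(ℂ^M)^{⊗m}`, acting in the tensor factors of `(ℂ^M)^{⊗n}` selected
by the embedding `e` (and as identity in the remaining factors). -/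
def liftOp {M m n : ℕ} (e : Fin m → Fin n)
    (A : Matrix (Fin m → Fin M) (Fin m → Fin M) ℂ) :
    Matrix (Fin n → Fin M) (Fin n → Fin M) ℂ :=
  Matrix.of fun f g =>
    A (f ∘ e) (g ∘ e) *
      ∏ k ∈ univ.filter (fun k => ∀ i, e i ≠ k), (if f k = g k then (1 : ℂ) else 0)

/-- The order-preserving identification of `{1,…,2(N−1)}` with
`({1,…,N}∖{a}) ∪ ({N+1,…,2N}∖{N+b})` inside `{1,…,2N}`. -/
def embAB (N : ℕ) (a b : Fin N) (i : Fin (2*(N-1))) : Fin (2*N) :=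
  if h : (i : ℕ) < N - 1 then
    (if (i : ℕ) < (a : ℕ) then ⟨(i : ℕ), by have := i.isLt; omega⟩
     else ⟨(i : ℕ) + 1, by have := i.isLt; omega⟩)
  else
    (if (i : ℕ) - (N - 1) < (b : ℕ) then ⟨N + ((i : ℕ) - (N - 1)), by have := i.isLt; omega⟩
     else ⟨N + ((i : ℕ) - (N - 1)) + 1, by have := i.isLt; omega⟩)

/-- Remove the `a`-th entry from a tuple of `N` complex numbers. -/
def removeAt {N : ℕ} (a : Fin N) (x : Fin N → ℂ) (i : Fin (N-1)) : ℂ :=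
  if h : (i : ℕ) < (a : ℕ) then x ⟨(i : ℕ), by have := i.isLt; have := a.isLt; omega⟩
  else x ⟨(i : ℕ) + 1, by have := i.isLt; omega⟩

/-- `A` acting in the `i`-th tensor factor of `(ℂ^M)^{⊗n}` (identity elsewhere),
e.g. `Q₁ = Q ⊗ 1_M^{⊗(n−1)}`. -/
def opAt (M : ℕ) {n : ℕ} (A : Matrix (Fin M) (Fin M) ℂ) (i : Fin n) :
    Matrix (Fin n → Fin M) (Fin n → Fin M) ℂ :=
  Matrix.of fun f g =>
    A (f i) (g i) * ∏ k ∈ univ.filter (· ≠ i), (if f k = g k then (1 : ℂ) else 0)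

/-- The flip operator `P(v ⊗ w) = w ⊗ v` on `ℂ^M ⊗ ℂ^M`. -/
def flipP (M : ℕ) : Matrix (Fin M × Fin M) (Fin M × Fin M) ℂ :=
  Matrix.of fun p q => if p.1 = q.2 ∧ p.2 = q.1 then (1 : ℂ) else 0


/-! ### Theta function -/

lemma sub_theta_one (τ z : ℂ) : theta τ (z + 1) = - theta τ z := by
  unfold theta
  congr 1
  rw [← tsum_neg]
  apply tsum_congr
  intro k
  have : (Real.pi : ℂ) * Complex.I * τ * ((k : ℂ) + 1/2)^2
      + 2 * (Real.pi : ℂ) * Complex.I * (z + 1 + 1/2) * ((k : ℂ) + 1/2) =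
      ((Real.pi : ℂ) * Complex.I * τ * ((k : ℂ) + 1/2)^2
      + 2 * (Real.pi : ℂ) * Complex.I * (z + 1/2) * ((k : ℂ) + 1/2)) +
      (k * (2 * (Real.pi : ℂ) * Complex.I) + (Real.pi : ℂ) * Complex.I) := by ring
  rw [this, Complex.exp_add, Complex.exp_add (_ * _) ((Real.pi : ℂ) * Complex.I),
    Complex.exp_int_mul_two_pi_mul_I,
    Complex.exp_pi_mul_I]
  ring

lemma sub_theta_tau (τ z : ℂ) : theta τ (z + τ) =
    - Complex.exp (-(Real.pi : ℂ) * Complex.I * τ - 2 * (Real.pi : ℂ) * Complex.I * z)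
      * theta τ z := by
  unfold theta
  rw [neg_mul_neg, ← tsum_mul_left, ← tsum_neg]
  rw [← (Equiv.addRight (1 : ℤ)).tsum_eq (fun k : ℤ => Complex.exp (-(Real.pi : ℂ) * Complex.I * τ -
    2 * (Real.pi : ℂ) * Complex.I * z) * Complex.exp ((Real.pi : ℂ) * Complex.I * τ *
      ((k : ℂ) + 1/2)^2 + 2 * (Real.pi : ℂ) * Complex.I * (z + 1/2) * ((k : ℂ) + 1/2)))]
  apply tsum_congr
  intro k
  rw [← Complex.exp_add]
  have : -(Real.pi : ℂ) * Complex.I * τ - 2 * (Real.pi : ℂ) * Complex.I * z +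
      ((Real.pi : ℂ) * Complex.I * τ * ((((Equiv.addRight (1 : ℤ)) k : ℤ) : ℂ) + 1/2)^2
      + 2 * (Real.pi : ℂ) * Complex.I * (z + 1/2) *
        ((((Equiv.addRight (1 : ℤ)) k : ℤ) : ℂ) + 1/2)) =
      ((Real.pi : ℂ) * Complex.I * τ * ((k : ℂ) + 1/2)^2
      + 2 * (Real.pi : ℂ) * Complex.I * (z + τ + 1/2) * ((k : ℂ) + 1/2)) +
      (Real.pi : ℂ) * Complex.I := by
    simp only [Equiv.coe_addRight, Int.cast_add, Int.cast_one]
    ring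
  rw [this, Complex.exp_add _ ((Real.pi : ℂ) * Complex.I), Complex.exp_pi_mul_I]
  ring

lemma sub_phi_one (τ z u : ℂ) : phi τ (z + 1) u = phi τ z u := by
  unfold phi
  rw [show z + 1 + u = (z + u) + 1 by ring, sub_theta_one, sub_theta_one, neg_mul, mul_neg,
    neg_div_neg_eq]

lemma sub_phi_tau (τ z u : ℂ) : phi τ (z + τ) u =
    Complex.exp (-(2 * (Real.pi : ℂ) * Complex.I * u)) * phi τ z u := by
  unfold phi
  rw [show z + τ + u = (z + u) + τ by ring, sub_theta_tau, sub_theta_tau]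
  rw [show -(Real.pi : ℂ) * Complex.I * τ - 2 * (Real.pi : ℂ) * Complex.I * (z + u) =
    (-(Real.pi : ℂ) * Complex.I * τ - 2 * (Real.pi : ℂ) * Complex.I * z) +
     -(2 * (Real.pi : ℂ) * Complex.I * u) by ring, Complex.exp_add]
  have h := Complex.exp_ne_zero
    (-(Real.pi : ℂ) * Complex.I * τ - 2 * (Real.pi : ℂ) * Complex.I * z)
  generalize Complex.exp
    (-(Real.pi : ℂ) * Complex.I * τ - 2 * (Real.pi : ℂ) * Complex.I * z) = E at h ⊢
  rw [show deriv (theta τ) 0 * (-(E * Complex.exp (-(2 * (Real.pi : ℂ) * Complex.I * u))) *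
      theta τ (z + u)) = (-E) * (Complex.exp (-(2 * (Real.pi : ℂ) * Complex.I * u)) *
      (deriv (theta τ) 0 * theta τ (z + u))) by ring,
    show -E * theta τ z * theta τ u = (-E) * (theta τ z * theta τ u) by ring,
    mul_div_mul_left _ _ (neg_ne_zero.mpr h), mul_div_assoc]

/-! ### The matrices `Q`, `Λ`, `T` -/

/-- primitive root -/
def subW (M : ℕ) : ℂ := Complex.exp (2 * (Real.pi : ℂ) * Complex.I / M)

lemma subW_pow (M : ℕ) (b : ℕ) :
    subW M ^ b = Complex.exp (2 * (Real.pi : ℂ) * Complex.I * b / M) := by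
  unfold subW
  rw [← Complex.exp_nat_mul]; congr 1; ring

lemma subW_ne (M : ℕ) : subW M ≠ 0 := Complex.exp_ne_zero _

lemma subW_M (M : ℕ) [NeZero M] : subW M ^ M = 1 := by
  rw [subW_pow, mul_div_assoc, div_self (Nat.cast_ne_zero.mpr (NeZero.ne M)), mul_one,
    Complex.exp_two_pi_mul_I]

lemma subW_neg (M : ℕ) [NeZero M] (a : ZMod M) :
    subW M ^ a.val * subW M ^ (-a).val = 1 := by
  rw [← pow_add]
  have h : M ∣ a.val + (-a).val := by
    rw [← ZMod.natCast_eq_zero_iff]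
    simp
  obtain ⟨c, hc⟩ := h
  rw [hc, pow_mul, subW_M, one_pow]

lemma sub_LQ (M : ℕ) [NeZero M] : Lmat M * Qmat M = subW M • (Qmat M * Lmat M) := by
  ext k l
  rw [Matrix.smul_apply]
  unfold Qmat
  rw [Matrix.mul_diagonal, Matrix.diagonal_mul]
  simp only [Lmat, Matrix.of_apply, smul_eq_mul]
  split_ifs with h
  · have hM : (M : ℂ) ≠ 0 := Nat.cast_ne_zero.mpr (NeZero.ne M)
    obtain ⟨c, hc⟩ := Int.dvd_of_emod_eq_zero h
    have hl : ((l : ℕ) : ℂ) = (k : ℕ) + 1 - M * c := by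
      have : ((l : ℕ) : ℤ) = (k : ℕ) + 1 - M * c := by linarith
      exact_mod_cast this
    rw [one_mul, mul_one, subW, ← Complex.exp_add, hl]
    rw [show 2 * (Real.pi : ℂ) * Complex.I * ((k : ℕ) + 1 - M * c + 1) / M =
      (2 * (Real.pi : ℂ) * Complex.I / M + 2 * (Real.pi : ℂ) * Complex.I * ((k : ℕ) + 1) / M) +
       ((-c : ℤ) : ℂ) * (2 * (Real.pi : ℂ) * Complex.I) by push_cast; field_simp; ring,
       Complex.exp_add _ (((-c : ℤ) : ℂ) * _), Complex.exp_int_mul_two_pi_mul_I, mul_one]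
  · simp

lemma sub_LpowQ (M : ℕ) [NeZero M] (b : ℕ) :
    Lmat M ^ b * Qmat M = subW M ^ b • (Qmat M * Lmat M ^ b) := by
  induction b with
  | zero => simp
  | succ b ih =>
    rw [pow_succ, mul_assoc, sub_LQ, mul_smul_comm, ← mul_assoc, ih, smul_mul_assoc, smul_smul,
      mul_assoc, pow_succ (subW M), mul_comm (subW M)]

lemma sub_LQpow (M : ℕ) [NeZero M] (b : ℕ) :
    Lmat M * Qmat M ^ b = subW M ^ b • (Qmat M ^ b * Lmat M) := by
  induction b with
  | zero => simp
  | succ b ih =>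
    rw [pow_succ, ← mul_assoc, ih, smul_mul_assoc, mul_assoc, sub_LQ, mul_smul_comm, smul_smul,
      mul_assoc, pow_succ (subW M)]

lemma sub_TQ (M : ℕ) [NeZero M] (a : ZMod M × ZMod M) :
    Tmat M a * Qmat M = subW M ^ a.2.val • (Qmat M * Tmat M a) := by
  unfold Tmat
  rw [smul_mul_assoc, mul_smul_comm, smul_comm (subW M ^ _), mul_assoc (Qmat M ^ _), sub_LpowQ,
    mul_smul_comm, ← mul_assoc, ← mul_assoc, ← pow_succ, ← pow_succ']

lemma sub_LT (M : ℕ) [NeZero M] (a : ZMod M × ZMod M) :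
    Lmat M * Tmat M a = subW M ^ a.1.val • (Tmat M a * Lmat M) := by
  unfold Tmat
  rw [smul_mul_assoc, mul_smul_comm, smul_comm (subW M ^ _), ← mul_assoc (Lmat M),
    sub_LQpow, smul_mul_assoc, mul_assoc (Qmat M ^ _), mul_assoc (Qmat M ^ _), ← pow_succ,
    ← pow_succ']

lemma sub_Q_unit (M : ℕ) : IsUnit (Qmat M) := by
  unfold Qmat
  rw [Matrix.isUnit_diagonal, Pi.isUnit_iff]
  intro k
  exact (Complex.exp_ne_zero _).isUnit

lemma sub_L_unit (M : ℕ) [NeZero M] : IsUnit (Lmat M) := by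
  have h : Lmat M * (Lmat M)ᵀ = 1 := by
    ext k l
    rw [Matrix.mul_apply, Matrix.one_apply]
    have hM : (0 : ℤ) < M := by exact_mod_cast Nat.pos_of_ne_zero (NeZero.ne M)
    let s : Fin M := ⟨((k : ℕ) + 1) % M, Nat.mod_lt _ (Nat.pos_of_ne_zero (NeZero.ne M))⟩
    rw [Finset.sum_eq_single s]
    · simp only [Lmat, Matrix.of_apply, Matrix.transpose_apply]
      have h1 : ((k : ℤ) - ((s : ℕ) : ℤ) + 1) % (M : ℤ) = 0 := by
        simp only [s]
        push_cast
        rw [← Int.dvd_iff_emod_eq_zero]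
        have := Int.dvd_self_sub_emod (x := ((k : ℕ) : ℤ) + 1) (m := (M : ℤ))
        convert this using 1
        ring
      rw [if_pos h1, one_mul]
      by_cases hkl : k = l
      · subst hkl; rw [if_pos h1, if_pos rfl]
      · rw [if_neg hkl, if_neg]
        intro h2
        apply hkl
        have h3 : (M : ℤ) ∣ (k : ℤ) - (l : ℤ) := by
          have h5 : (k : ℤ) - (l : ℤ) = ((k : ℤ) - ((s : ℕ) : ℤ) + 1) -
              ((l : ℤ) - ((s : ℕ) : ℤ) + 1) := by ring
          rw [h5]
          exact dvd_sub (Int.dvd_of_emod_eq_zero h1) (Int.dvd_of_emod_eq_zero h2)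
        have h4 := Int.eq_zero_of_abs_lt_dvd h3 (by
          have := k.isLt; have := l.isLt; rw [abs_lt]; omega)
        ext; omega
    · intro m _ hm
      simp only [Lmat, Matrix.of_apply, Matrix.transpose_apply]
      rw [if_neg, zero_mul]
      intro h2
      apply hm
      have h3 : ((k : ℤ) + 1) % M = (m : ℤ) % M := by
        rw [Int.emod_eq_emod_iff_emod_sub_eq_zero]
        rw [← h2]; congr 1; ring
      rw [Int.emod_eq_of_lt (a := (m : ℤ)) (by omega) (by have := m.isLt; omega)] at h3
      ext
      simp only [s]
      zify
      exact h3.symm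
    · simp
  exact IsUnit.of_mul_eq_one _ h

/-! ### R matrix -/

lemma sub_Rmat_gen (M : ℕ) [NeZero M] (τ ℏ x x' e : ℂ)
    (U : Matrix (Fin M × Fin M) (Fin M × Fin M) ℂ)
    (h : ∀ a : ZMod M × ZMod M, ∃ w : ℂ, (Tmat M a ⊗ₖ Tmat M (-a)) * U =
        w • (U * (Tmat M a ⊗ₖ Tmat M (-a))) ∧
      Complex.exp (2 * (Real.pi : ℂ) * Complex.I * (a.2.val : ℂ) * x' / M) *
        phi τ x' (ℏ / M + omegaA M τ a) = e * w *
      (Complex.exp (2 * (Real.pi : ℂ) * Complex.I * (a.2.val : ℂ) * x / M) *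
        phi τ x (ℏ / M + omegaA M τ a))) :
    U * Rmat M τ ℏ x' = e • (Rmat M τ ℏ x * U) := by
  unfold Rmat
  rw [mul_smul_comm, smul_mul_assoc, smul_comm e, Finset.mul_sum, Finset.sum_mul,
    Finset.smul_sum (r := e)]
  congr 1
  apply Finset.sum_congr rfl
  intro a _
  obtain ⟨w, h1, h2⟩ := h a
  rw [mul_smul_comm, smul_mul_assoc, h1, h2, smul_smul, smul_smul]
  congr 1
  ring

lemma sub_kron_left {M : ℕ} (A B U : Matrix (Fin M) (Fin M) ℂ) (w : ℂ)
    (h : A * U = w • (U * A)) :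
    (A ⊗ₖ B) * (U ⊗ₖ (1 : Matrix (Fin M) (Fin M) ℂ)) =
      w • ((U ⊗ₖ (1 : Matrix (Fin M) (Fin M) ℂ)) * (A ⊗ₖ B)) := by
  rw [← Matrix.mul_kronecker_mul, ← Matrix.mul_kronecker_mul, h, Matrix.smul_kronecker, mul_one,
    one_mul]

lemma sub_kron_right {M : ℕ} (A B U : Matrix (Fin M) (Fin M) ℂ) (w : ℂ)
    (h : B * U = w • (U * B)) :
    (A ⊗ₖ B) * ((1 : Matrix (Fin M) (Fin M) ℂ) ⊗ₖ U) =
      w • (((1 : Matrix (Fin M) (Fin M) ℂ) ⊗ₖ U) * (A ⊗ₖ B)) := by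
  rw [← Matrix.mul_kronecker_mul, ← Matrix.mul_kronecker_mul, h, Matrix.kronecker_smul, mul_one,
    one_mul]

lemma sub_TL (M : ℕ) [NeZero M] (a : ZMod M × ZMod M) :
    Tmat M a * Lmat M = (subW M ^ a.1.val)⁻¹ • (Lmat M * Tmat M a) := by
  rw [sub_LT, smul_smul, inv_mul_cancel₀ (pow_ne_zero _ (subW_ne M)), one_smul]

/-- coefficient -/
def subC (M : ℕ) (τ ℏ : ℂ) (a : ZMod M × ZMod M) (x : ℂ) : ℂ :=
  Complex.exp (2 * (Real.pi : ℂ) * Complex.I * (a.2.val : ℂ) * x / M) *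
        phi τ x (ℏ / M + omegaA M τ a)

lemma subC_one (M : ℕ) [NeZero M] (τ ℏ : ℂ) (a : ZMod M × ZMod M) (x : ℂ) :
    subC M τ ℏ a (x + 1) = subW M ^ a.2.val * subC M τ ℏ a x := by
  unfold subC
  rw [sub_phi_one, subW_pow, ← mul_assoc, ← Complex.exp_add]
  congr 2
  ring

lemma subC_tau (M : ℕ) [NeZero M] (τ ℏ : ℂ) (a : ZMod M × ZMod M) (x : ℂ) :
    subC M τ ℏ a (x + τ) = (Complex.exp (2 * (Real.pi : ℂ) * Complex.I * ℏ / M))⁻¹ *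
      (subW M ^ a.1.val)⁻¹ * subC M τ ℏ a x := by
  unfold subC omegaA
  rw [sub_phi_tau, subW_pow, ← mul_assoc, ← mul_assoc, ← Complex.exp_neg, ← Complex.exp_neg,
    ← Complex.exp_add, ← Complex.exp_add, ← Complex.exp_add]
  congr 2
  ring

lemma sub_R_one_left (M : ℕ) [NeZero M] (τ ℏ x : ℂ) :
    (Qmat M ⊗ₖ (1 : Matrix (Fin M) (Fin M) ℂ)) * Rmat M τ ℏ (x + 1) =
      (1 : ℂ)⁻¹ • (Rmat M τ ℏ x * (Qmat M ⊗ₖ (1 : Matrix (Fin M) (Fin M) ℂ))) := by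
  apply sub_Rmat_gen M τ ℏ x (x+1) _ _
  intro a
  refine ⟨_, sub_kron_left _ _ _ _ (sub_TQ M a), ?_⟩
  have := subC_one M τ ℏ a x
  unfold subC at this
  rw [this, inv_one, one_mul]

lemma sub_R_one_right (M : ℕ) [NeZero M] (τ ℏ x : ℂ) :
    ((1 : Matrix (Fin M) (Fin M) ℂ) ⊗ₖ Qmat M) * Rmat M τ ℏ (x - 1) =
      (1 : ℂ) • (Rmat M τ ℏ x * ((1 : Matrix (Fin M) (Fin M) ℂ) ⊗ₖ Qmat M)) := by
  apply sub_Rmat_gen M τ ℏ x (x-1) _ _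
  intro a
  refine ⟨_, sub_kron_right _ _ _ _ (sub_TQ M (-a)), ?_⟩
  have := subC_one M τ ℏ a (x - 1)
  rw [sub_add_cancel] at this
  unfold subC at this
  rw [this, one_mul, ← mul_assoc, Prod.snd_neg, mul_comm (subW M ^ _), subW_neg, one_mul]

lemma sub_R_tau_left (M : ℕ) [NeZero M] (τ ℏ x : ℂ) :
    (Lmat M ⊗ₖ (1 : Matrix (Fin M) (Fin M) ℂ)) * Rmat M τ ℏ (x + τ) =
      (Complex.exp (2 * (Real.pi : ℂ) * Complex.I * ℏ / M))⁻¹ •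
        (Rmat M τ ℏ x * (Lmat M ⊗ₖ (1 : Matrix (Fin M) (Fin M) ℂ))) := by
  apply sub_Rmat_gen M τ ℏ x (x+τ) _ _
  intro a
  refine ⟨_, sub_kron_left _ _ _ _ (sub_TL M a), ?_⟩
  have := subC_tau M τ ℏ a x
  unfold subC at this
  rw [this]

lemma sub_R_tau_right (M : ℕ) [NeZero M] (τ ℏ x : ℂ) :
    ((1 : Matrix (Fin M) (Fin M) ℂ) ⊗ₖ Lmat M) * Rmat M τ ℏ (x - τ) =
      (Complex.exp (2 * (Real.pi : ℂ) * Complex.I * ℏ / M)) •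
      (Rmat M τ ℏ x * ((1 : Matrix (Fin M) (Fin M) ℂ) ⊗ₖ Lmat M)) := by
  apply sub_Rmat_gen M τ ℏ x (x-τ) _ _
  intro a
  refine ⟨_, sub_kron_right _ _ _ _ (sub_TL M (-a)), ?_⟩
  have := subC_tau M τ ℏ a (x - τ)
  rw [sub_add_cancel] at this
  unfold subC at this
  rw [this, Prod.fst_neg]
  have h := subW_neg M a.1
  have h1 := pow_ne_zero a.1.val (subW_ne M)
  have h2 := pow_ne_zero (-a.1).val (subW_ne M)
  have h3 := Complex.exp_ne_zero (2 * (Real.pi : ℂ) * Complex.I * ℏ / M)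
  rw [← mul_assoc, show ∀ A B C : ℂ, A * B * (A⁻¹ * C) = (A * A⁻¹) * (B * C) by intros; ring,
    mul_inv_cancel₀ h3, one_mul, ← mul_inv, mul_comm (subW M ^ (-a.1).val), h, inv_one, one_mul]

/-! ### operators on tensor powers -/

lemma sub_opAt_apply (M : ℕ) {n : ℕ} (U : Matrix (Fin M) (Fin M) ℂ) (i : Fin n)
    (f g : Fin n → Fin M) :
    opAt M U i f g = ∑ m, if g = Function.update f i m then U (f i) m else 0 := by
  unfold opAt
  rw [Matrix.of_apply, Finset.prod_ite_zero]
  simp only [Finset.prod_const_one]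
  rw [Finset.sum_eq_single (g i)]
  · by_cases h : g = Function.update f i (g i)
    · rw [if_pos h, if_pos, mul_one]
      intro k hk
      have hk' : k ≠ i := by simpa using hk
      rw [h, Function.update_of_ne hk']
    · rw [if_neg h, if_neg, mul_zero]
      intro h2
      apply h
      ext1 k
      by_cases hk : k = i
      · subst hk; simp
      · rw [Function.update_of_ne hk, h2 k (by simpa using hk)]
  · intro m _ hm
    rw [if_neg]
    intro h
    apply hm
    rw [h]; simp
  · simp

lemma sub_opAt_apply' (M : ℕ) {n : ℕ} (U : Matrix (Fin M) (Fin M) ℂ) (i : Fin n)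
    (f g : Fin n → Fin M) :
    opAt M U i f g = ∑ m, if f = Function.update g i m then U m (g i) else 0 := by
  unfold opAt
  rw [Matrix.of_apply, Finset.prod_ite_zero]
  simp only [Finset.prod_const_one]
  rw [Finset.sum_eq_single (f i)]
  · by_cases h : f = Function.update g i (f i)
    · rw [if_pos h, if_pos, mul_one]
      intro k hk
      have hk' : k ≠ i := by simpa using hk
      rw [h, Function.update_of_ne hk']
    · rw [if_neg h, if_neg, mul_zero]
      intro h2
      apply h
      ext1 k
      by_cases hk : k = i
      · subst hk; simp
      · rw [Function.update_of_ne hk, h2 k (by simpa using hk)]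
  · intro m _ hm
    rw [if_neg]
    intro h
    apply hm
    rw [h]; simp
  · simp

lemma sub_opAt_mul (M : ℕ) {n : ℕ} (U : Matrix (Fin M) (Fin M) ℂ) (i : Fin n)
    (X : Matrix (Fin n → Fin M) (Fin n → Fin M) ℂ) (f g : Fin n → Fin M) :
    (opAt M U i * X) f g = ∑ m, U (f i) m * X (Function.update f i m) g := by
  rw [Matrix.mul_apply]
  simp_rw [sub_opAt_apply, Finset.sum_mul]
  rw [Finset.sum_comm]
  simp

lemma sub_mul_opAt (M : ℕ) {n : ℕ} (U : Matrix (Fin M) (Fin M) ℂ) (i : Fin n)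
    (X : Matrix (Fin n → Fin M) (Fin n → Fin M) ℂ) (f g : Fin n → Fin M) :
    (X * opAt M U i) f g = ∑ m, X f (Function.update g i m) * U m (g i) := by
  rw [Matrix.mul_apply]
  simp_rw [sub_opAt_apply', Finset.mul_sum]
  rw [Finset.sum_comm]
  simp

lemma sub_opAt_opAt (M : ℕ) {n : ℕ} (U V : Matrix (Fin M) (Fin M) ℂ) (i : Fin n) :
    opAt M U i * opAt M V i = opAt M (U * V) i := by
  ext f g
  rw [sub_opAt_mul]
  unfold opAt
  simp only [Matrix.of_apply, Matrix.mul_apply, Finset.sum_mul, Function.update_self]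
  apply Finset.sum_congr rfl
  intro m _
  rw [mul_assoc]
  congr 2
  apply Finset.prod_congr rfl
  intro k hk
  have hk' : k ≠ i := by simpa using hk
  rw [Function.update_of_ne hk']

lemma sub_opAt_one (M : ℕ) {n : ℕ} (i : Fin n) : opAt M 1 i = 1 := by
  ext f g
  rw [sub_opAt_apply, Finset.sum_eq_single (f i)]
  · simp [Matrix.one_apply, eq_comm]
  · intro m _ hm
    rw [Matrix.one_apply_ne hm.symm]; simp
  · simp

lemma sub_opAt_unit (M : ℕ) {n : ℕ} (i : Fin n) (U : Matrix (Fin M) (Fin M) ℂ) (h : IsUnit U) :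
    IsUnit (opAt M U i) := by
  obtain ⟨V, hV⟩ := h.exists_right_inv
  exact IsUnit.of_mul_eq_one (opAt M V i) (by rw [sub_opAt_opAt, hV, sub_opAt_one])

lemma sub_kron_mul_left {M : ℕ} (U : Matrix (Fin M) (Fin M) ℂ)
    (R : Matrix (Fin M × Fin M) (Fin M × Fin M) ℂ) (a b c d : Fin M) :
    ((U ⊗ₖ (1 : Matrix (Fin M) (Fin M) ℂ)) * R) (a, b) (c, d) = ∑ m, U a m * R (m, b) (c, d) := by
  simp [Matrix.mul_apply, Fintype.sum_prod_type, Matrix.one_apply]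

lemma sub_mul_kron_left {M : ℕ} (U : Matrix (Fin M) (Fin M) ℂ)
    (R : Matrix (Fin M × Fin M) (Fin M × Fin M) ℂ) (a b c d : Fin M) :
    (R * (U ⊗ₖ (1 : Matrix (Fin M) (Fin M) ℂ))) (a, b) (c, d) = ∑ m, R (a, b) (m, d) * U m c := by
  simp [Matrix.mul_apply, Fintype.sum_prod_type, Matrix.one_apply]

lemma sub_kron_mul_right {M : ℕ} (U : Matrix (Fin M) (Fin M) ℂ)
    (R : Matrix (Fin M × Fin M) (Fin M × Fin M) ℂ) (a b c d : Fin M) :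
    (((1 : Matrix (Fin M) (Fin M) ℂ) ⊗ₖ U) * R) (a, b) (c, d) = ∑ m, U b m * R (a, m) (c, d) := by
  simp [Matrix.mul_apply, Fintype.sum_prod_type, Matrix.one_apply]

lemma sub_mul_kron_right {M : ℕ} (U : Matrix (Fin M) (Fin M) ℂ)
    (R : Matrix (Fin M × Fin M) (Fin M × Fin M) ℂ) (a b c d : Fin M) :
    (R * ((1 : Matrix (Fin M) (Fin M) ℂ) ⊗ₖ U)) (a, b) (c, d) = ∑ m, R (a, b) (c, m) * U m d := by
  simp [Matrix.mul_apply, Fintype.sum_prod_type, Matrix.one_apply]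

lemma sub_prod_upd_left {M n : ℕ} (s : Finset (Fin n)) (i : Fin n) (hi : i ∉ s) (m : Fin M)
    (f g : Fin n → Fin M) :
    ∏ k ∈ s, (if Function.update f i m k = g k then (1 : ℂ) else 0) =
      ∏ k ∈ s, (if f k = g k then (1 : ℂ) else 0) := by
  apply Finset.prod_congr rfl
  intro k hk
  rw [Function.update_of_ne (by rintro rfl; exact hi hk)]

lemma sub_prod_upd_right {M n : ℕ} (s : Finset (Fin n)) (i : Fin n) (hi : i ∉ s) (m : Fin M)
    (f g : Fin n → Fin M) :
    ∏ k ∈ s, (if f k = Function.update g i m k then (1 : ℂ) else 0) =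
      ∏ k ∈ s, (if f k = g k then (1 : ℂ) else 0) := by
  apply Finset.prod_congr rfl
  intro k hk
  rw [Function.update_of_ne (by rintro rfl; exact hi hk)]

lemma sub_Rop_left (M : ℕ) [NeZero M] (τ ℏ : ℂ) {n : ℕ} (i j : Fin n) (hij : i ≠ j) (x x' e : ℂ)
    (U : Matrix (Fin M) (Fin M) ℂ)
    (h : (U ⊗ₖ (1 : Matrix (Fin M) (Fin M) ℂ)) * Rmat M τ ℏ x' =
      e • (Rmat M τ ℏ x * (U ⊗ₖ (1 : Matrix (Fin M) (Fin M) ℂ)))) :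
    opAt M U i * Rop M τ ℏ i j x' = e • (Rop M τ ℏ i j x * opAt M U i) := by
  ext f g
  rw [Matrix.smul_apply, sub_opAt_mul, sub_mul_opAt]
  simp only [Rop, Matrix.of_apply, Function.update_self, Function.update_of_ne hij.symm]
  have h1 := congrFun (congrFun h (f i, f j)) (g i, g j)
  rw [Matrix.smul_apply, sub_kron_mul_left, sub_mul_kron_left] at h1
  simp only [sub_prod_upd_left _ i (by simp : i ∉ univ.filter (fun k => k ≠ i ∧ k ≠ j)),
    sub_prod_upd_right _ i (by simp : i ∉ univ.filter (fun k => k ≠ i ∧ k ≠ j))]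
  simp only [← mul_assoc, mul_right_comm _ _ (U _ _)]
  rw [← Finset.sum_mul, ← Finset.sum_mul, h1, smul_mul_assoc]

lemma sub_Rop_right (M : ℕ) [NeZero M] (τ ℏ : ℂ) {n : ℕ} (i j : Fin n) (hij : i ≠ j) (x x' e : ℂ)
    (U : Matrix (Fin M) (Fin M) ℂ)
    (h : ((1 : Matrix (Fin M) (Fin M) ℂ) ⊗ₖ U) * Rmat M τ ℏ x' =
      e • (Rmat M τ ℏ x * ((1 : Matrix (Fin M) (Fin M) ℂ) ⊗ₖ U))) :
    opAt M U j * Rop M τ ℏ i j x' = e • (Rop M τ ℏ i j x * opAt M U j) := by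
  ext f g
  rw [Matrix.smul_apply, sub_opAt_mul, sub_mul_opAt]
  simp only [Rop, Matrix.of_apply, Function.update_self, Function.update_of_ne hij]
  have h1 := congrFun (congrFun h (f i, f j)) (g i, g j)
  rw [Matrix.smul_apply, sub_kron_mul_right, sub_mul_kron_right] at h1
  simp only [sub_prod_upd_left _ j (by simp : j ∉ univ.filter (fun k => k ≠ i ∧ k ≠ j)),
    sub_prod_upd_right _ j (by simp : j ∉ univ.filter (fun k => k ≠ i ∧ k ≠ j))]
  simp only [← mul_assoc, mul_right_comm _ _ (U _ _)]
  rw [← Finset.sum_mul, ← Finset.sum_mul, h1, smul_mul_assoc]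

lemma sub_Rop_other (M : ℕ) [NeZero M] (τ ℏ : ℂ) {n : ℕ} (i j l : Fin n) (hi : i ≠ l) (hj : j ≠ l)
    (x : ℂ) (U : Matrix (Fin M) (Fin M) ℂ) :
    opAt M U l * Rop M τ ℏ i j x = Rop M τ ℏ i j x * opAt M U l := by
  ext f g
  rw [sub_opAt_mul, sub_mul_opAt]
  simp only [Rop, Matrix.of_apply, Function.update_of_ne hi, Function.update_of_ne hj]
  have hl : l ∈ univ.filter (fun k => k ≠ i ∧ k ≠ j) := by simp [hi.symm, hj.symm]
  simp only [← Finset.mul_prod_erase _ _ hl, sub_prod_upd_left _ l (Finset.notMem_erase l _),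
    sub_prod_upd_right _ l (Finset.notMem_erase l _), Function.update_self]
  simp
  ring

/-! ### The intertwining relation -/

/-- twisted intertwining -/
def SubRel {ι : Type*} [Fintype ι] (U : Matrix ι ι ℂ) (c : ℂ) (A' A : Matrix ι ι ℂ) : Prop :=
  U * A' = c • (A * U)

lemma SubRel.mul {ι : Type*} [Fintype ι] {U : Matrix ι ι ℂ} {c d : ℂ} {A' A B' B : Matrix ι ι ℂ}
    (h1 : SubRel U c A' A) (h2 : SubRel U d B' B) : SubRel U (c * d) (A' * B') (A * B) := by
  unfold SubRel at *
  rw [← mul_assoc, h1, smul_mul_assoc, mul_assoc, h2, mul_smul_comm, smul_smul, mul_assoc]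

lemma SubRel.list {ι : Type*} [Fintype ι] [DecidableEq ι] {U : Matrix ι ι ℂ} {κ : Type*}
    (L : List κ) (c : κ → ℂ) (A' A : κ → Matrix ι ι ℂ) (h : ∀ i ∈ L, SubRel U (c i) (A' i) (A i)) :
    SubRel U (L.map c).prod (L.map A').prod (L.map A).prod := by
  induction L with
  | nil => simp [SubRel]
  | cons a L ih =>
    simp only [List.map_cons, List.prod_cons]
    exact (h a (by simp)).mul (ih fun i hi => h i (by simp [hi]))

lemma SubRel.asc {ι : Type*} [Fintype ι] [DecidableEq ι] {U : Matrix ι ι ℂ} {n : ℕ}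
    (s : Finset (Fin n)) (c : Fin n → ℂ) (A' A : Fin n → Matrix ι ι ℂ)
    (h : ∀ i ∈ s, SubRel U (c i) (A' i) (A i)) :
    SubRel U (∏ i ∈ s, c i) (oprodAsc s A') (oprodAsc s A) := by
  have := SubRel.list (U := U) (s.sort (· ≤ ·)) c A' A (fun i hi => h i (by simpa using hi))
  have e : ((s.sort (· ≤ ·)).map c).prod = ∏ i ∈ s, c i := by
    rw [← Multiset.prod_coe, ← Multiset.map_coe, Finset.sort_eq]; rfl
  rw [e] at this
  exact this

lemma SubRel.desc {ι : Type*} [Fintype ι] [DecidableEq ι] {U : Matrix ι ι ℂ} {n : ℕ}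
    (s : Finset (Fin n)) (c : Fin n → ℂ) (A' A : Fin n → Matrix ι ι ℂ)
    (h : ∀ i ∈ s, SubRel U (c i) (A' i) (A i)) :
    SubRel U (∏ i ∈ s, c i) (oprodDesc s A') (oprodDesc s A) := by
  have := SubRel.list (U := U) (s.sort (· ≤ ·)).reverse c A' A (fun i hi => h i (by simpa using hi))
  have e : (((s.sort (· ≤ ·)).reverse).map c).prod = ∏ i ∈ s, c i := by
    rw [List.map_reverse, List.prod_reverse, ← Multiset.prod_coe, ← Multiset.map_coe,
      Finset.sort_eq]; rfl
  rw [e] at this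
  exact this

lemma SubRel.sum {ι : Type*} [Fintype ι] {U : Matrix ι ι ℂ} {κ : Type*}
    (s : Finset κ) (c : ℂ) (A' A : κ → Matrix ι ι ℂ) (h : ∀ i ∈ s, SubRel U c (A' i) (A i)) :
    SubRel U c (∑ i ∈ s, A' i) (∑ i ∈ s, A i) := by
  unfold SubRel
  rw [Finset.mul_sum, Finset.sum_mul, Finset.smul_sum]
  exact Finset.sum_congr rfl h

/-- the multiplier of `R_{ij}` -/
def subE {n : ℕ} (l : Fin n) (e : ℂ) (i j : Fin n) : ℂ :=
  if i = l then e⁻¹ else if j = l then e else 1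

lemma sub_Rz (M : ℕ) [NeZero M] (τ ℏ : ℂ) {n : ℕ} (z' z : Fin n → ℂ) (l : Fin n) (s e : ℂ)
    (U : Matrix (Fin M) (Fin M) ℂ)
    (hz : ∀ i, z' i = z i + if i = l then s else 0)
    (h1 : ∀ x, (U ⊗ₖ (1 : Matrix (Fin M) (Fin M) ℂ)) * Rmat M τ ℏ (x + s) =
      e⁻¹ • (Rmat M τ ℏ x * (U ⊗ₖ (1 : Matrix (Fin M) (Fin M) ℂ))))
    (h2 : ∀ x, ((1 : Matrix (Fin M) (Fin M) ℂ) ⊗ₖ U) * Rmat M τ ℏ (x - s) =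
      e • (Rmat M τ ℏ x * ((1 : Matrix (Fin M) (Fin M) ℂ) ⊗ₖ U)))
    (i j : Fin n) (hij : i ≠ j) :
    SubRel (opAt M U l) (subE l e i j) (Rz M τ ℏ z' i j) (Rz M τ ℏ z i j) := by
  unfold SubRel subE Rz
  rw [hz i, hz j]
  by_cases hi : i = l
  · subst hi
    rw [if_pos rfl, if_pos rfl, if_neg hij.symm]
    apply sub_Rop_left _ _ _ _ _ hij
    rw [← h1]; congr 2; ring
  · by_cases hj : j = l
    · subst hj
      rw [if_neg hi, if_pos rfl, if_neg hi, if_pos rfl]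
      apply sub_Rop_right _ _ _ _ _ hij
      rw [← h2]; congr 2; ring
    · rw [if_neg hi, if_neg hj, if_neg hi, if_neg hj, add_zero, add_zero, one_smul]
      exact sub_Rop_other _ _ _ _ _ _ hi hj _ _

lemma sub_main (M : ℕ) [NeZero M] (τ ℏ : ℂ) (N : ℕ) (hN : 1 ≤ N) (x y : Fin N → ℂ) (k : ℕ)
    (t s e : ℂ) (he : e ≠ 0) (U : Matrix (Fin M) (Fin M) ℂ) (hU : IsUnit U)
    (h1 : ∀ x, (U ⊗ₖ (1 : Matrix (Fin M) (Fin M) ℂ)) * Rmat M τ ℏ (x + s) =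
      e⁻¹ • (Rmat M τ ℏ x * (U ⊗ₖ (1 : Matrix (Fin M) (Fin M) ℂ))))
    (h2 : ∀ x, ((1 : Matrix (Fin M) (Fin M) ℂ) ⊗ₖ U) * Rmat M τ ℏ (x - s) =
      e • (Rmat M τ ℏ x * ((1 : Matrix (Fin M) (Fin M) ℂ) ⊗ₖ U))) :
    F1 M τ ℏ N k (Function.update x ⟨0, hN⟩ (t + s)) y -
        F2 M τ ℏ N k (Function.update x ⟨0, hN⟩ (t + s)) y =
      e ^ k • ((opAt M U (finN1 (⟨0, hN⟩ : Fin N)))⁻¹ *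
        (F1 M τ ℏ N k (Function.update x ⟨0, hN⟩ t) y -
          F2 M τ ℏ N k (Function.update x ⟨0, hN⟩ t) y) *
        opAt M U (finN1 (⟨0, hN⟩ : Fin N))) := by
  set l : Fin (2 * N) := finN1 (⟨0, hN⟩ : Fin N) with hl
  have hl0 : (l : ℕ) = 0 := rfl
  have hlN : l ∈ N1set N := by simp [N1set, hl0]; omega
  have hmin : ∀ i : Fin (2 * N), ¬ i < l := by
    intro i hi; rw [Fin.lt_def] at hi; omega
  have hpos : ∀ i : Fin (2 * N), i ≠ l → l < i := by
    intro i hi; rw [Fin.lt_def]; rw [ne_eq, Fin.ext_iff] at hi; omega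
  have hdis : ∀ i ∈ N2set N, ∀ j ∈ N1set N, i ≠ j := by
    intro i hi j hj h
    simp [N1set, N2set] at hi hj
    subst h; omega
  set z' := zfun N (Function.update x ⟨0, hN⟩ (t + s)) y with hz'
  set z := zfun N (Function.update x ⟨0, hN⟩ t) y with hzz
  have hz : ∀ i, z' i = z i + if i = l then s else 0 := by
    intro i
    rw [hz', hzz]
    unfold zfun
    by_cases hi : i = l
    · have : (i : ℕ) < N := by rw [hi, hl0]; omega
      have h0 : (⟨(i : ℕ), this⟩ : Fin N) = ⟨0, hN⟩ := by
        ext; simp [hi, hl0]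
      rw [if_pos hi, dif_pos this, dif_pos this, h0, Function.update_self, Function.update_self]
    · rw [if_neg hi, add_zero]
      split_ifs with h
      · have h0 : (⟨(i : ℕ), h⟩ : Fin N) ≠ ⟨0, hN⟩ := by
          intro h0; apply hi; ext; rw [hl0]; simpa using h0
        rw [Function.update_of_ne h0, Function.update_of_ne h0]
      · rfl
  have hR := sub_Rz M τ ℏ z' z l s e U hz h1 h2
  have hF1 : SubRel (opAt M U l) (e ^ k) (F1 M τ ℏ N k (Function.update x ⟨0, hN⟩ (t + s)) y)
      (F1 M τ ℏ N k (Function.update x ⟨0, hN⟩ t) y) := by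
    unfold F1
    apply SubRel.sum
    intro I hI
    rw [Finset.mem_powersetCard] at hI
    obtain ⟨hIs, hIc⟩ := hI
    have r1 : SubRel (opAt M U l)
        (∏ i ∈ I, ∏ j ∈ (N1set N \ I).filter (fun j => i < j), subE l e i j)
        (calR M τ ℏ z' I (N1set N \ I)) (calR M τ ℏ z I (N1set N \ I)) := by
      apply SubRel.desc
      intro i hi
      apply SubRel.asc
      intro j hj
      exact hR i j (Finset.mem_filter.mp hj).2.ne
    have r2 : SubRel (opAt M U l)
        (∏ i ∈ N2set N, ∏ j ∈ I, subE l e i j)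
        (calY M τ ℏ z' (N2set N) I) (calY M τ ℏ z (N2set N) I) := by
      apply SubRel.asc
      intro i hi
      apply SubRel.asc
      intro j hj
      exact hR i j (hdis i hi j (hIs hj))
    have r3 : SubRel (opAt M U l)
        (∏ i ∈ I, ∏ j ∈ (N1set N \ I).filter (fun j => j < i), subE l e i j)
        (calR' M τ ℏ z' I (N1set N \ I)) (calR' M τ ℏ z I (N1set N \ I)) := by
      apply SubRel.desc
      intro i hi
      apply SubRel.asc
      intro j hj
      exact hR i j (Finset.mem_filter.mp hj).2.ne'
    have r := (r1.mul r2).mul r3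
    convert r using 1
    have p2 : ∀ i ∈ N2set N, ∏ j ∈ I, subE l e i j = if l ∈ I then e else 1 := by
      intro i hi
      have : ∀ j ∈ I, subE l e i j = if j = l then e else 1 := by
        intro j _
        unfold subE
        rw [if_neg (hdis i hi l hlN)]
      rw [Finset.prod_congr rfl this, Finset.prod_ite_eq']
    have hN2c : (N2set N).card = N := by
      have h : N2set N = (univ : Finset (Fin N)).image finN2 := by
        ext i
        simp only [N2set, Finset.mem_filter, Finset.mem_univ, true_and, Finset.mem_image]
        constructor
        · intro h
          refine ⟨⟨(i : ℕ) - N, by have := i.isLt; omega⟩, ?_⟩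
          ext; simp [finN2]; omega
        · rintro ⟨b, rfl⟩; simp [finN2]
      rw [h, Finset.card_image_of_injective, Finset.card_univ, Fintype.card_fin]
      intro a b hab
      simp [finN2] at hab
      ext; omega
    have hN1c : (N1set N).card = N := by
      have h : N1set N = (univ : Finset (Fin N)).image finN1 := by
        ext i
        simp only [N1set, Finset.mem_filter, Finset.mem_univ, true_and, Finset.mem_image]
        constructor
        · intro h
          exact ⟨⟨(i : ℕ), h⟩, rfl⟩
        · rintro ⟨b, rfl⟩; simp [finN1]
      rw [h, Finset.card_image_of_injective, Finset.card_univ, Fintype.card_fin]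
      intro a b hab
      simp [finN1] at hab
      ext; omega
    rw [Finset.prod_congr rfl p2, Finset.prod_const, hN2c]
    by_cases hlI : l ∈ I
    · have p1 : ∀ i ∈ I, (∏ j ∈ (N1set N \ I).filter (fun j => i < j), subE l e i j) =
          if i = l then (e⁻¹) ^ (N - k) else 1 := by
        intro i hi
        split_ifs with hil
        · rw [hil]
          have hf : (N1set N \ I).filter (fun j => l < j) = N1set N \ I := by
            apply Finset.filter_true_of_mem
            intro j hj
            apply hpos
            intro hjl
            rw [hjl] at hj
            exact (Finset.mem_sdiff.mp hj).2 hlI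
          have hcc : N - k = (N1set N \ I).card := by
            rw [Finset.card_sdiff_of_subset hIs, hIc, hN1c]
          rw [hf, hcc, ← Finset.prod_const]
          apply Finset.prod_congr rfl
          intro j _
          simp [subE]
        · apply Finset.prod_eq_one
          intro j hj
          have hjl : j ≠ l := by
            rintro rfl
            exact hmin _ (Finset.mem_filter.mp hj).2
          simp [subE, hil, hjl]
      have p3 : ∀ i ∈ I, (∏ j ∈ (N1set N \ I).filter (fun j => j < i), subE l e i j) = 1 := by
        intro i hi
        apply Finset.prod_eq_one
        intro j hj
        rw [Finset.mem_filter, Finset.mem_sdiff] at hj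
        have hjl : j ≠ l := by
          rintro rfl
          exact hj.1.2 hlI
        have hil : i ≠ l := by
          rintro rfl
          exact hmin _ hj.2
        simp [subE, hil, hjl]
      have hkN : k ≤ N := by
        have := Finset.card_le_card hIs
        omega
      rw [Finset.prod_congr rfl p1, Finset.prod_congr rfl p3, Finset.prod_ite_eq', if_pos hlI,
        if_pos hlI, Finset.prod_const_one, mul_one]
      obtain ⟨d, rfl⟩ := Nat.exists_eq_add_of_le hkN
      rw [Nat.add_sub_cancel_left, pow_add, mul_comm, mul_assoc, ← mul_pow, mul_inv_cancel₀ he,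
        one_pow, mul_one]
    · have p1 : ∀ i ∈ I, (∏ j ∈ (N1set N \ I).filter (fun j => i < j), subE l e i j) = 1 := by
        intro i hi
        apply Finset.prod_eq_one
        intro j hj
        have hil : i ≠ l := by
          rintro rfl
          exact hlI hi
        have hjl : j ≠ l := by
          rintro rfl
          exact hmin _ (Finset.mem_filter.mp hj).2
        simp [subE, hil, hjl]
      have p3 : ∀ i ∈ I, (∏ j ∈ (N1set N \ I).filter (fun j => j < i), subE l e i j) = e := by
        intro i hi
        have hil : i ≠ l := by
          rintro rfl
          exact hlI hi
        rw [Finset.prod_eq_single l]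
        · simp [subE, hil]
        · intro j _ hj
          simp [subE, hil, hj]
        · intro h
          exfalso
          apply h
          rw [Finset.mem_filter, Finset.mem_sdiff]
          exact ⟨⟨hlN, hlI⟩, hpos i hil⟩
      rw [Finset.prod_congr rfl p1, Finset.prod_congr rfl p3, if_neg hlI, Finset.prod_const_one,
        Finset.prod_const, hIc, one_pow, one_mul, one_mul]
  have hF2 : SubRel (opAt M U l) (e ^ k) (F2 M τ ℏ N k (Function.update x ⟨0, hN⟩ (t + s)) y)
      (F2 M τ ℏ N k (Function.update x ⟨0, hN⟩ t) y) := by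
    unfold F2
    apply SubRel.sum
    intro J hJ
    rw [Finset.mem_powersetCard] at hJ
    obtain ⟨hJs, hJc⟩ := hJ
    have hR0 : ∀ i ∈ N2set N, ∀ j ∈ N2set N, i ≠ j →
        SubRel (opAt M U l) 1 (Rz M τ ℏ z' i j) (Rz M τ ℏ z i j) := by
      intro i hi j hj hij
      have := hR i j hij
      unfold subE at this
      rwa [if_neg (hdis i hi l hlN), if_neg (hdis j hj l hlN)] at this
    have r1 := SubRel.desc (U := opAt M U l) J (fun _ => 1)
      (fun j => oprodAsc ((N2set N).filter fun l => j < l ∧ l ∉ J) fun l => Rz M τ ℏ z' l j)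
      (fun j => oprodAsc ((N2set N).filter fun l => j < l ∧ l ∉ J) fun l => Rz M τ ℏ z l j) (by
        intro i hi
        have := SubRel.asc (U := opAt M U l) ((N2set N).filter fun l => i < l ∧ l ∉ J) (fun _ => 1)
          (fun l => Rz M τ ℏ z' l i) (fun l => Rz M τ ℏ z l i) (by
            intro j hj
            rw [Finset.mem_filter] at hj
            exact hR0 j hj.1 i (hJs hi) hj.2.1.ne')
        rwa [Finset.prod_const_one] at this)
    have r3 := SubRel.desc (U := opAt M U l) J (fun _ => 1)
      (fun j => oprodAsc ((N2set N).filter fun m => m < j ∧ m ∉ J) fun m => Rz M τ ℏ z' m j)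
      (fun j => oprodAsc ((N2set N).filter fun m => m < j ∧ m ∉ J) fun m => Rz M τ ℏ z m j) (by
        intro i hi
        have := SubRel.asc (U := opAt M U l) ((N2set N).filter fun m => m < i ∧ m ∉ J) (fun _ => 1)
          (fun l => Rz M τ ℏ z' l i) (fun l => Rz M τ ℏ z l i) (by
            intro j hj
            rw [Finset.mem_filter] at hj
            exact hR0 j hj.1 i (hJs hi) hj.2.1.ne)
        rwa [Finset.prod_const_one] at this)
    have r2 := SubRel.asc (U := opAt M U l) J (fun _ => e)
      (fun j => oprodAsc (N1set N) fun i => Rz M τ ℏ z' j i)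
      (fun j => oprodAsc (N1set N) fun i => Rz M τ ℏ z j i) (by
        intro i hi
        have := SubRel.asc (U := opAt M U l) (N1set N) (fun j => if j = l then e else 1)
          (fun j => Rz M τ ℏ z' i j) (fun j => Rz M τ ℏ z i j) (by
            intro j hj
            have := hR i j (hdis i (hJs hi) j hj)
            unfold subE at this
            rwa [if_neg (hdis i (hJs hi) l hlN)] at this)
        rwa [Finset.prod_ite_eq', if_pos hlN] at this)
    have r := (r1.mul r2).mul r3
    rw [Finset.prod_const_one, Finset.prod_const, hJc, one_mul, mul_one] at r
    exact r
  have hu := sub_opAt_unit M l U hU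
  have hdet := (Matrix.isUnit_iff_isUnit_det _).mp hu
  unfold SubRel at hF1 hF2
  rw [mul_assoc, ← mul_smul_comm, sub_mul, smul_sub, ← hF1, ← hF2, ← mul_sub,
    Matrix.nonsing_inv_mul_cancel_left _ _ hdet]

/-- Quasi-periodicity of `𝓕[k,N]` in `z₁ = x₁` (relations (3.14)):
`𝓕(z₁+1) = Q₁^{−1} 𝓕(z₁) Q₁` and `𝓕(z₁+τ) = exp(2πi kℏ/M) Λ₁^{−1} 𝓕(z₁) Λ₁`. -/
theorem quasi_periodicity_of_F
    (M : ℕ) [NeZero M] (τ ℏ : ℂ) (hτ : 0 < τ.im)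
    (N : ℕ) (hN : 1 ≤ N) (x y : Fin N → ℂ) (k : ℕ) (hk1 : 1 ≤ k) (hkN : k ≤ N)
    (hℏ : ℏ ∉ lat τ)
    (hdef : ∀ c : ZMod M × ZMod M, ℏ / M + omegaA M τ c ∉ lat τ)
    (hz : ∀ i j : Fin (2*N), i ≠ j → i ≠ finN1 (⟨0, hN⟩ : Fin N) →
      j ≠ finN1 (⟨0, hN⟩ : Fin N) → zfun N x y i - zfun N x y j ∉ lat τ)
    (t : ℂ) :
    (F1 M τ ℏ N k (Function.update x ⟨0, hN⟩ (t + 1)) y -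
        F2 M τ ℏ N k (Function.update x ⟨0, hN⟩ (t + 1)) y =
      (opAt M (Qmat M) (finN1 (⟨0, hN⟩ : Fin N)))⁻¹ *
        (F1 M τ ℏ N k (Function.update x ⟨0, hN⟩ t) y -
          F2 M τ ℏ N k (Function.update x ⟨0, hN⟩ t) y) *
        opAt M (Qmat M) (finN1 (⟨0, hN⟩ : Fin N))) ∧
    (F1 M τ ℏ N k (Function.update x ⟨0, hN⟩ (t + τ)) y -
        F2 M τ ℏ N k (Function.update x ⟨0, hN⟩ (t + τ)) y =
      Complex.exp (2 * (Real.pi : ℂ) * Complex.I * k * ℏ / M) •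
        ((opAt M (Lmat M) (finN1 (⟨0, hN⟩ : Fin N)))⁻¹ *
          (F1 M τ ℏ N k (Function.update x ⟨0, hN⟩ t) y -
            F2 M τ ℏ N k (Function.update x ⟨0, hN⟩ t) y) *
          opAt M (Lmat M) (finN1 (⟨0, hN⟩ : Fin N)))) := by
  constructor
  · have h := sub_main M τ ℏ N hN x y k t 1 1 one_ne_zero (Qmat M) (sub_Q_unit M)
      (sub_R_one_left M τ ℏ) (sub_R_one_right M τ ℏ)
    rw [one_pow, one_smul] at h
    exact h
  · have h := sub_main M τ ℏ N hN x y k t τ _ (Complex.exp_ne_zero _) (Lmat M) (sub_L_unit M)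
      (sub_R_tau_left M τ ℏ) (sub_R_tau_right M τ ℏ)
    rw [← Complex.exp_nat_mul, show (k : ℂ) * (2 * (Real.pi : ℂ) * Complex.I * ℏ / M) =
      2 * (Real.pi : ℂ) * Complex.I * k * ℏ / M by ring] at h
    exact h

end
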